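/- Sign preservation of the spatial derivative (Corollary 3.2, point 1): under the hypotheses of the explicit derivative formula (one-dimensional domain (a,b), K continuously differentiable, u0 continuously differentiable, u a solution with continuous ∂_x u and commuting mixed partials), for every t ∈ [0,T] and x ∈ (a,b) the sign of ∂_x u(t,x) equals the sign of u0'(x): ∂_x u(t,x) > 0 iff u0'(x) > 0, ∂_x u(t,x) < 0 iff u0'(x) < 0, and ∂_x u(t,x) = 0 iff u0'(x) = 0. In particular, if u0 is nonincreasing on (a,b) then u(t,·) is nonincreasing on (a,b) for every t ∈ [0,T]. -/

import Mathlib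

open MeasureTheory Set

lemma aux_pos (v A : ℝ → ℝ) (T C lam v0 : ℝ) (hlam : 0 ≤ lam) (hv0 : 0 < v0)
    (hv : ∀ t ∈ Icc (0:ℝ) T, HasDerivWithinAt v (A t * v t + lam * v0) (Icc 0 T) t)
    (hA : ∀ t ∈ Icc (0:ℝ) T, |A t| ≤ C) (h0 : v 0 = v0) :
    ∀ t ∈ Icc (0:ℝ) T, 0 < v t := by
  intro t ht
  have hB : ∀ s : ℝ, HasDerivAt (fun s => -(v0 * Real.exp (-(C+1) * s)))
      ((C+1) * (v0 * Real.exp (-(C+1) * s))) s := by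
    intro s
    have h1 : HasDerivAt (fun s : ℝ => -(C+1) * s) (-(C+1)) s := by
      simpa using (hasDerivAt_id s).const_mul (-(C+1))
    exact (h1.exp.const_mul v0).neg.congr_deriv (by ring)
  have key := image_le_of_deriv_right_lt_deriv_boundary' (f := fun s => - v s)
    (f' := fun s => -(A s * v s + lam * v0)) (a := 0) (b := T)
    (B := fun s => -(v0 * Real.exp (-(C+1) * s)))
    (B' := fun s => (C+1) * (v0 * Real.exp (-(C+1) * s)))
    (fun s hs => (hv s hs).continuousWithinAt.neg)
    (fun s hs => ((hv s (Ico_subset_Icc_self hs)).mono_of_mem_nhdsWithin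
      (Icc_mem_nhdsGE_of_mem hs)).neg)
    (by simp [h0])
    (fun s _ => (hB s).continuousAt.continuousWithinAt)
    (fun s _ => (hB s).hasDerivWithinAt)
    (by
      intro s hs he
      have hp : 0 < v0 * Real.exp (-(C+1) * s) := by positivity
      have he' : v s = v0 * Real.exp (-(C+1) * s) := by simpa using he
      have hAs := (abs_le.1 (hA s (Ico_subset_Icc_self hs))).1
      rw [← he'] at hp ⊢
      nlinarith [mul_nonneg hlam hv0.le])
    ht
  have hp : 0 < v0 * Real.exp (-(C+1) * t) := by positivity
  simp only [neg_le_neg_iff] at key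
  linarith

lemma aux_zero (v A : ℝ → ℝ) (T C : ℝ)
    (hv : ∀ t ∈ Icc (0:ℝ) T, HasDerivWithinAt v (A t * v t) (Icc 0 T) t)
    (hA : ∀ t ∈ Icc (0:ℝ) T, |A t| ≤ C) (h0 : v 0 = 0) :
    ∀ t ∈ Icc (0:ℝ) T, v t = 0 := by
  intro t ht
  have := norm_le_gronwallBound_of_norm_deriv_right_le (f := v) (f' := fun s => A s * v s)
    (δ := 0) (K := C) (ε := 0) (a := 0) (b := T)
    (fun s hs => (hv s hs).continuousWithinAt)
    (fun s hs => (hv s (Ico_subset_Icc_self hs)).mono_of_mem_nhdsWithin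
      (Icc_mem_nhdsGE_of_mem hs))
    (by simp [h0])
    (by
      intro s hs
      rw [norm_mul, add_zero]
      exact mul_le_mul_of_nonneg_right (hA s (Ico_subset_Icc_self hs)) (norm_nonneg _))
    t ht
  rw [gronwallBound_ε0_δ0] at this
  simpa using this

lemma aux_neg (v A : ℝ → ℝ) (T C lam v0 : ℝ) (hlam : 0 ≤ lam) (hv0 : v0 < 0)
    (hv : ∀ t ∈ Icc (0:ℝ) T, HasDerivWithinAt v (A t * v t + lam * v0) (Icc 0 T) t)
    (hA : ∀ t ∈ Icc (0:ℝ) T, |A t| ≤ C) (h0 : v 0 = v0) :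
    ∀ t ∈ Icc (0:ℝ) T, v t < 0 := by
  intro t ht
  have := aux_pos (fun s => - v s) A T C lam (-v0) hlam (by linarith)
    (fun s hs => by
      exact (hv s hs).neg.congr_deriv (by ring)) hA (by simp [h0]) t ht
  linarith

lemma aux_int (a b : ℝ) (K K' : ℝ → ℝ) (hKnonneg : ∀ ξ, 0 ≤ K ξ) (BK : ℝ)
    (hKbdd : ∀ ξ, K ξ ≤ BK)
    (hKderiv : ∀ ξ, HasDerivAt K (K' ξ) ξ) (hK'cont : Continuous K')
    (BK' : ℝ) (hK'bdd : ∀ ξ, |K' ξ| ≤ BK')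
    (h : ℝ) (hh : 0 < h) (w : ℝ → ℝ) (hw : Measurable w) (M : ℝ)
    (hwb : ∀ x ∈ Ioo a b, |w x| ≤ M) (s : ℝ) (hs : |s| ≤ M) :
    ∃ g : ℝ, |g| ≤ (BK' / h * (2 * M + 1) + BK) * volume.real (Ioo a b) ∧
      HasDerivAt (fun r => ∫ y in Ioo a b, K ((w y - r) / h) * (w y - r)) g s := by
  have hKc : Continuous K := continuous_iff_continuousAt.2 fun ξ => (hKderiv ξ).continuousAt
  have hM : 0 ≤ M := (abs_nonneg s).trans hs
  have hBK : 0 ≤ BK := (hKnonneg 0).trans (hKbdd 0)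
  have hBK' : 0 ≤ BK' := (abs_nonneg _).trans (hK'bdd 0)
  let F' : ℝ → ℝ → ℝ := fun r y =>
    (K' ((w y - r) / h) * (-1 / h)) * (w y - r) + K ((w y - r) / h) * (-1)
  have hbd : ∀ y ∈ Ioo a b, ∀ r ∈ Metric.ball s 1,
      ‖F' r y‖ ≤ BK' / h * (2 * M + 1) + BK := by
    intro y hy r hr
    have h1 : |w y - r| ≤ 2 * M + 1 := by
      have := hwb y hy
      rw [Metric.mem_ball, Real.dist_eq] at hr
      rw [abs_le] at *
      rw [abs_lt] at hr
      constructor <;> linarith [hr.1, hr.2, this.1, this.2, hs.1, hs.2]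
    refine (norm_add_le _ _).trans (add_le_add ?_ ?_)
    · rw [norm_mul, norm_mul]
      simp only [Real.norm_eq_abs]
      refine mul_le_mul ?_ h1 (abs_nonneg _) (by positivity)
      have : |(-1 / h)| = 1 / h := by rw [abs_div, abs_of_pos hh]; simp
      rw [this, ← mul_one_div BK' h]
      exact mul_le_mul_of_nonneg_right (hK'bdd _) (by positivity)
    · rw [norm_mul, Real.norm_eq_abs, abs_of_nonneg (hKnonneg _)]
      simpa using hKbdd _
  have hfin : volume (Ioo a b) < ⊤ := measure_Ioo_lt_top
  have hFm : ∀ r, Measurable (fun y => K ((w y - r) / h) * (w y - r)) := fun r =>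
    (hKc.measurable.comp ((hw.sub_const r).div_const h)).mul (hw.sub_const r)
  have hF'm : Measurable (F' s) :=
    (((hK'cont.measurable.comp ((hw.sub_const s).div_const h)).mul_const _).mul
      (hw.sub_const s)).add ((hKc.measurable.comp ((hw.sub_const s).div_const h)).mul_const _)
  refine ⟨∫ y in Ioo a b, F' s y, ?_, ?_⟩
  · exact norm_setIntegral_le_of_norm_le_const hfin
      (fun y hy => hbd y hy s (Metric.mem_ball_self one_pos))
  · refine (hasDerivAt_integral_of_dominated_loc_of_deriv_le (μ := volume.restrict (Ioo a b))
      (F := fun r y => K ((w y - r) / h) * (w y - r)) (F' := F')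
      (bound := fun _ => BK' / h * (2 * M + 1) + BK)
      (Metric.ball_mem_nhds s one_pos) (Filter.Eventually.of_forall fun r =>
        (hFm r).aestronglyMeasurable) ?_ hF'm.aestronglyMeasurable ?_ ?_ ?_).2
    · refine Measure.integrableOn_of_bounded (M := BK * (2 * M)) hfin.ne
        (hFm s).aestronglyMeasurable ?_
      refine (ae_restrict_iff' measurableSet_Ioo).2 (Filter.Eventually.of_forall fun y hy => ?_)
      rw [norm_mul, Real.norm_eq_abs, abs_of_nonneg (hKnonneg _)]
      refine mul_le_mul (hKbdd _) ?_ (norm_nonneg _) hBK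
      have := norm_sub_le (w y) s
      have h2 := hwb y hy
      simp only [Real.norm_eq_abs] at *
      linarith
    · exact (ae_restrict_iff' measurableSet_Ioo).2 (Filter.Eventually.of_forall hbd)
    · exact integrableOn_const hfin.ne
    · refine Filter.Eventually.of_forall fun y r _ => ?_
      have h1 : HasDerivAt (fun r => w y - r) (-1) r := by
        simpa using (hasDerivAt_id r).const_sub (w y)
      exact ((hKderiv _).comp r (h1.div_const h)).mul h1

/-- Sign preservation of the spatial derivative (Corollary 3.2, point 1): under the
hypotheses of the explicit derivative formula, for every `t ∈ [0,T]` and `x ∈ (a,b)`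
the sign of `∂_x u(t,x)` equals the sign of `u0'(x)`; in particular if `u0` is
nonincreasing on `(a,b)` then so is `u(t,·)` for every `t ∈ [0,T]`. -/
theorem stmt_7
    (a b : ℝ) (hab : a < b)
    (K K' : ℝ → ℝ) (hKnonneg : ∀ ξ, 0 ≤ K ξ) (BK : ℝ) (hKbdd : ∀ ξ, K ξ ≤ BK)
    (LK : NNReal) (hKlip : LipschitzWith LK K)
    (hKderiv : ∀ ξ, HasDerivAt K (K' ξ) ξ) (hK'cont : Continuous K')
    (BK' : ℝ) (hK'bdd : ∀ ξ, |K' ξ| ≤ BK')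
    (h : ℝ) (hh : 0 < h) (lam : ℝ) (hlam : 0 ≤ lam) (T : ℝ) (hT : 0 < T)
    (u0 u0' : ℝ → ℝ) (hu0deriv : ∀ x, HasDerivAt u0 (u0' x) x) (hu0'cont : Continuous u0')
    (u ux ut utx : ℝ → ℝ → ℝ)
    (humeas : ∀ t ∈ Icc (0:ℝ) T, Measurable (u t))
    (M : ℝ) (hubdd : ∀ t ∈ Icc (0:ℝ) T, ∀ x ∈ Ioo a b, |u t x| ≤ M)
    (hinit : ∀ x ∈ Ioo a b, u 0 x = u0 x)
    (hsol : ∀ t ∈ Icc (0:ℝ) T, ∀ x ∈ Ioo a b,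
      HasDerivWithinAt (fun τ => u τ x) (ut t x) (Icc 0 T) t)
    (hut : ∀ t ∈ Icc (0:ℝ) T, ∀ x ∈ Ioo a b,
      ut t x = (∫ y in Ioo a b, K ((u t y - u t x) / h) * (u t y - u t x))
        + lam * (u0 x - u t x))
    (hux : ∀ t ∈ Icc (0:ℝ) T, ∀ x ∈ Ioo a b, HasDerivAt (fun z => u t z) (ux t x) x)
    (hucont : ContinuousOn (fun p : ℝ × ℝ => u p.1 p.2) (Icc 0 T ×ˢ Ioo a b))
    (huxcont : ContinuousOn (fun p : ℝ × ℝ => ux p.1 p.2) (Icc 0 T ×ˢ Ioo a b))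
    (hmix1 : ∀ t ∈ Icc (0:ℝ) T, ∀ x ∈ Ioo a b,
      HasDerivWithinAt (fun τ => ux τ x) (utx t x) (Icc 0 T) t)
    (hmix2 : ∀ t ∈ Icc (0:ℝ) T, ∀ x ∈ Ioo a b,
      HasDerivAt (fun z => ut t z) (utx t x) x) :
    (∀ t ∈ Icc (0:ℝ) T, ∀ x ∈ Ioo a b,
      (0 < ux t x ↔ 0 < u0' x) ∧ (ux t x < 0 ↔ u0' x < 0) ∧ (ux t x = 0 ↔ u0' x = 0)) ∧
    ((∀ x ∈ Ioo a b, ∀ y ∈ Ioo a b, x ≤ y → u0 y ≤ u0 x) →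
      ∀ t ∈ Icc (0:ℝ) T, ∀ x ∈ Ioo a b, ∀ y ∈ Ioo a b, x ≤ y → u t y ≤ u t x) := by
  have hux0 : ∀ x ∈ Ioo a b, ux 0 x = u0' x := by
    intro x hx
    refine (hux 0 ⟨le_rfl, hT.le⟩ x hx).unique ((hu0deriv x).congr_of_eventuallyEq ?_)
    filter_upwards [isOpen_Ioo.mem_nhds hx] with z hz using hinit z hz
  have hode : ∀ x ∈ Ioo a b, ∀ t, ∃ A : ℝ, t ∈ Icc (0:ℝ) T →
      |A| ≤ (BK' / h * (2 * M + 1) + BK) * volume.real (Ioo a b) + lam ∧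
      utx t x = A * ux t x + lam * u0' x := by
    intro x hx t
    by_cases ht : t ∈ Icc (0:ℝ) T
    · obtain ⟨g, hg, hd⟩ := aux_int a b K K' hKnonneg BK hKbdd hKderiv hK'cont BK' hK'bdd h hh
        (u t) (humeas t ht) M (hubdd t ht) (u t x) (hubdd t ht x hx)
      refine ⟨g - lam, fun _ => ⟨?_, ?_⟩⟩
      · refine (abs_sub _ _).trans ?_
        rw [abs_of_nonneg hlam]
        linarith
      · have h1 := (HasDerivAt.comp x hd (hux t ht x hx)).add
          (((hu0deriv x).sub (hux t ht x hx)).const_mul lam)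
        have h2 := (hmix2 t ht x hx).unique (h1.congr_of_eventuallyEq (by
          filter_upwards [isOpen_Ioo.mem_nhds hx] with z hz using hut t ht z hz))
        rw [h2]
        ring
    · exact ⟨0, fun h' => absurd h' ht⟩
  have main : ∀ t ∈ Icc (0:ℝ) T, ∀ x ∈ Ioo a b,
      (0 < u0' x → 0 < ux t x) ∧ (u0' x < 0 → ux t x < 0) ∧ (u0' x = 0 → ux t x = 0) := by
    intro t ht x hx
    choose A hA using hode x hx
    have hv : ∀ t ∈ Icc (0:ℝ) T, HasDerivWithinAt (fun τ => ux τ x)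
        (A t * ux t x + lam * u0' x) (Icc 0 T) t := fun t ht => by
      rw [← (hA t ht).2]
      exact hmix1 t ht x hx
    have hAb := fun t ht => (hA t ht).1
    refine ⟨fun h0 => ?_, fun h0 => ?_, fun h0 => ?_⟩
    · exact aux_pos (fun τ => ux τ x) A T _ lam _ hlam h0 hv hAb (hux0 x hx) t ht
    · exact aux_neg (fun τ => ux τ x) A T _ lam _ hlam h0 hv hAb (hux0 x hx) t ht
    · exact aux_zero (fun τ => ux τ x) A T _ (fun s hs => by simpa [h0] using hv s hs) hAb
        ((hux0 x hx).trans h0) t ht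
  refine ⟨fun t ht x hx => ?_, fun hanti t ht => ?_⟩
  · obtain ⟨h1, h2, h3⟩ := main t ht x hx
    rcases lt_trichotomy (u0' x) 0 with h0 | h0 | h0
    · have := h2 h0
      refine ⟨⟨fun _ => ?_, fun _ => ?_⟩, ⟨fun _ => h0, fun _ => this⟩,
        ⟨fun _ => ?_, fun _ => ?_⟩⟩ <;> linarith
    · have := h3 h0
      simp [this, h0]
    · have := h1 h0
      refine ⟨⟨fun _ => h0, fun _ => this⟩, ⟨fun _ => ?_, fun _ => ?_⟩,
        ⟨fun _ => ?_, fun _ => ?_⟩⟩ <;> linarith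
  · have hneg : ∀ x ∈ Ioo a b, ux t x ≤ 0 := by
      intro x hx
      have h0 : u0' x ≤ 0 := by
        have hA : AntitoneOn u0 (Ioo a b) := fun x hx y hy hxy => hanti x hx y hy hxy
        have h1 := hA.derivWithin_nonpos (x := x)
        rwa [derivWithin_of_isOpen isOpen_Ioo hx, (hu0deriv x).deriv] at h1
      obtain ⟨_, h2, h3⟩ := main t ht x hx
      rcases h0.lt_or_eq with h0 | h0
      · exact (h2 h0).le
      · exact (h3 h0).le
    have hanti' : AntitoneOn (u t) (Ioo a b) := by
      refine antitoneOn_of_deriv_nonpos (convex_Ioo a b)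
        (fun x hx => (hux t ht x hx).continuousAt.continuousWithinAt) ?_ ?_
      · rw [interior_Ioo]
        exact fun x hx => (hux t ht x hx).differentiableAt.differentiableWithinAt
      · rw [interior_Ioo]
        intro x hx
        have h1 : deriv (u t) x = ux t x := (hux t ht x hx).deriv
        rw [h1]
        exact hneg x hx
    exact fun x hx y hy hxy => hanti' hx hy hxy
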